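/- The subgroups of GL(2,ℂ) generated by the sets {A₁, A₂}, {A₂, A₃}, {A₁, A₃}, and {A₁, A₃(A₂A₁)²} are finite of orders 8, 6, 6, and 12 respectively (these are the reflection groups G(2,1,2), G(3,3,2), G(3,3,2), and G(6,6,2)). -/

import Mathlib

open Matrix

noncomputable section

/-- i√2. -/
def s2 : ℂ := Complex.I * Real.sqrt 2

/-- R₁ = [[1,0,0],[0,1,0],[0,1−i√2,−1]]. -/
def R₁ : Matrix (Fin 3) (Fin 3) ℂ := !![1, 0, 0; 0, 1, 0; 0, 1 - s2, -1]

/-- R₂ = [[1,0,0],[0,−1+i√2,2],[0,1+i√2,1−i√2]]. -/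
def R₂ : Matrix (Fin 3) (Fin 3) ℂ := !![1, 0, 0; 0, -1 + s2, 2; 0, 1 + s2, 1 - s2]

/-- R₃ = [[1,0,0],[(1+i√2)/2,1,−1−i√2],[1,0,−1]]. -/
def R₃ : Matrix (Fin 3) (Fin 3) ℂ := !![1, 0, 0; (1 + s2) / 2, 1, -1 - s2; 1, 0, -1]

/-- The translation matrix T_v for v = (v₁, v₂). -/
def T (v₁ v₂ : ℂ) : Matrix (Fin 3) (Fin 3) ℂ := !![1, 0, 0; v₁, 1, 0; v₂, 0, 1]

/-- A₁, the linear part of R₁. -/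
def A₁ : Matrix (Fin 2) (Fin 2) ℂ := !![1, 0; 1 - s2, -1]

/-- A₂, the linear part of R₂. -/
def A₂ : Matrix (Fin 2) (Fin 2) ℂ := !![-1 + s2, 2; 1 + s2, 1 - s2]

/-- A₃, the linear part of R₃. -/
def A₃ : Matrix (Fin 2) (Fin 2) ℂ := !![1, -1 - s2; 0, -1]

end

open scoped MatrixGroups

/-- The subgroup of GL(2,ℂ) generated by (the invertible-matrix lifts of) a set of
2×2 matrices. -/
noncomputable def genGL2 (S : Set (Matrix (Fin 2) (Fin 2) ℂ)) : Subgroup (GL (Fin 2) ℂ) :=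
  Subgroup.closure {g : GL (Fin 2) ℂ | (g : Matrix (Fin 2) (Fin 2) ℂ) ∈ S}

section Involutions

variable {G : Type*} [Group G] {a b : G}

theorem mem_zpowers_or_mul_mem_zpowers (ha : a * a = 1) (hb : b * b = 1) {x : G}
    (hx : x ∈ Subgroup.closure {a, b}) :
    x ∈ Subgroup.zpowers (a * b) ∨ x * a ∈ Subgroup.zpowers (a * b) := by
  have hab : a * b ∈ Subgroup.zpowers (a * b) := Subgroup.mem_zpowers _
  have hba : b * a ∈ Subgroup.zpowers (a * b) := by
    have := inv_mem hab
    rwa [_root_.mul_inv_rev, inv_eq_of_mul_eq_one_left ha, inv_eq_of_mul_eq_one_left hb] at this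
  have step : ∀ x y : G, y ∈ ({a, b} : Set G) →
      (x ∈ Subgroup.zpowers (a * b) ∨ x * a ∈ Subgroup.zpowers (a * b)) →
      x * y ∈ Subgroup.zpowers (a * b) ∨ x * y * a ∈ Subgroup.zpowers (a * b) := by
    rintro x y (rfl | rfl) h
    · simpa [mul_assoc, ha] using h.symm
    · rcases h with h | h
      · right
        simpa only [mul_assoc] using mul_mem h hba
      · left
        have := mul_mem h hab
        rwa [mul_assoc, ← mul_assoc a, ha, one_mul] at this
  have hinv : ∀ y ∈ ({a, b} : Set G), y⁻¹ = y := by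
    rintro y (rfl | rfl)
    · exact inv_eq_of_mul_eq_one_left ha
    · exact inv_eq_of_mul_eq_one_left hb
  induction hx using Subgroup.closure_induction_right with
  | one => exact Or.inl (one_mem _)
  | mul_right x _ y hy ih => exact step x y hy ih
  | mul_inv_cancel x _ y hy ih => rw [hinv y hy]; exact step x y hy ih

/-- Two involutions `a`, `b` generate a dihedral group of order twice the order of `a * b`,
provided `a` is not a power of `a * b`. -/
theorem card_closure_pair_of_involutions (ha : a * a = 1) (hb : b * b = 1)
    (hmem : a ∉ Subgroup.zpowers (a * b)) :
    Nat.card (Subgroup.closure {a, b}) = 2 * orderOf (a * b) := by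
  have haK : a ∈ Subgroup.closure {a, b} := Subgroup.subset_closure (by simp)
  have hbK : b ∈ Subgroup.closure {a, b} := Subgroup.subset_closure (by simp)
  have hle : Subgroup.zpowers (a * b) ≤ Subgroup.closure {a, b} := by
    simpa using mul_mem haK hbK
  have hidx : (Subgroup.zpowers (a * b)).relIndex (Subgroup.closure {a, b}) = 2 := by
    rw [Subgroup.relIndex, Subgroup.index_eq_two_iff]
    refine ⟨⟨a, haK⟩, fun x => ?_⟩
    simp only [Subgroup.mem_subgroupOf, Subgroup.coe_mul]
    rcases mem_zpowers_or_mul_mem_zpowers ha hb x.2 with h | h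
    · exact Or.inr ⟨h, fun h' => hmem ((Subgroup.mul_mem_cancel_left _ h).1 h')⟩
    · exact Or.inl ⟨h, fun h' => hmem ((Subgroup.mul_mem_cancel_left _ h').1 h)⟩
  rw [← Nat.card_zpowers, ← hidx, mul_comm, ← Subgroup.relIndex_bot_left,
    ← Subgroup.relIndex_bot_left, Subgroup.relIndex_mul_relIndex _ _ _ bot_le hle]

end Involutions

theorem card_genGL2_pair {M N : Matrix (Fin 2) (Fin 2) ℂ} (hM : M * M = 1) (hN : N * N = 1)
    (hMdet : M.det = -1) (hNdet : N.det = -1) :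
    Nat.card (genGL2 {M, N}) = 2 * orderOf (M * N) := by
  let a : GL (Fin 2) ℂ := ⟨M, M, hM, hM⟩
  let b : GL (Fin 2) ℂ := ⟨N, N, hN, hN⟩
  have hset : {g : GL (Fin 2) ℂ | (g : Matrix (Fin 2) (Fin 2) ℂ) ∈ ({M, N} : Set _)} = {a, b} := by
    ext g
    simp [a, b, Units.ext_iff]
  have hmem : a ∉ Subgroup.zpowers (a * b) := by
    intro h
    have hker : Subgroup.zpowers (a * b) ≤ (Matrix.GeneralLinearGroup.det (n := Fin 2)
        (R := ℂ)).ker := by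
      rw [Subgroup.zpowers_le, MonoidHom.mem_ker, Units.ext_iff]
      simp [a, b, hMdet, hNdet]
    have hdet := congrArg Units.val (MonoidHom.mem_ker.1 (hker h))
    norm_num [a, hMdet] at hdet
  rw [genGL2, hset, card_closure_pair_of_involutions (Units.ext hM) (Units.ext hN) hmem,
    ← orderOf_units]
  rfl

theorem s2_mul_self : s2 * s2 = -2 := by
  have h : ((√2 : ℝ) : ℂ) * (√2 : ℝ) = 2 := by
    rw [← Complex.ofReal_mul, Real.mul_self_sqrt (by norm_num)]
    norm_num
  rw [s2, mul_mul_mul_comm, Complex.I_mul_I, h]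
  ring

theorem A₁_mul_self : A₁ * A₁ = 1 := by
  ext i j
  fin_cases i <;> fin_cases j <;> simp [A₁, Matrix.mul_apply]

theorem A₂_mul_self : A₂ * A₂ = 1 := by
  ext i j
  fin_cases i <;> fin_cases j <;> simp [A₂, Matrix.mul_apply] <;> grind [s2_mul_self]

theorem A₃_mul_self : A₃ * A₃ = 1 := by
  ext i j
  fin_cases i <;> fin_cases j <;> simp [A₃, Matrix.mul_apply]
  ring

theorem det_A₁ : A₁.det = -1 := by
  simp [A₁, Matrix.det_fin_two]

theorem det_A₂ : A₂.det = -1 := by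
  simp [A₂, Matrix.det_fin_two]
  grind [s2_mul_self]

theorem det_A₃ : A₃.det = -1 := by
  simp [A₃, Matrix.det_fin_two]

/-- Cayley–Hamilton for `2 × 2` matrices of determinant one. -/
theorem mul_self_of_det_eq_one {M : Matrix (Fin 2) (Fin 2) ℂ} (h : M.det = 1) :
    M ^ 2 = M.trace • M - 1 := by
  rw [Matrix.det_fin_two] at h
  ext i j
  fin_cases i <;> fin_cases j <;>
    simp [pow_two, Matrix.mul_apply, Matrix.trace_fin_two] <;> grind

theorem neg_one_ne_one_matrix : (-1 : Matrix (Fin 2) (Fin 2) ℂ) ≠ 1 := by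
  intro h
  have := congrFun (congrFun h 0) 0
  norm_num at this

theorem orderOf_eq_four_of_trace_eq_zero {M : Matrix (Fin 2) (Fin 2) ℂ} (hdet : M.det = 1)
    (htr : M.trace = 0) : orderOf M = 4 := by
  have h : M ^ 2 = -1 := by simp [mul_self_of_det_eq_one hdet, htr]
  refine orderOf_eq_prime_pow (p := 2) (n := 1) ?_ ?_
  · simpa [h] using neg_one_ne_one_matrix
  · rw [show 2 ^ (1 + 1) = 2 * 2 by norm_num, pow_mul, h]
    simp

theorem orderOf_eq_three_of_trace_eq_neg_one {M : Matrix (Fin 2) (Fin 2) ℂ} (hdet : M.det = 1)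
    (htr : M.trace = -1) : orderOf M = 3 := by
  have h : M ^ 2 = -M - 1 := by simp [mul_self_of_det_eq_one hdet, htr]
  refine orderOf_eq_prime ?_ ?_
  · rw [pow_succ, h, sub_mul, neg_mul, ← pow_two, h]
    simp
  · rintro rfl
    norm_num [Matrix.trace_one] at htr

theorem orderOf_eq_six_of_trace_eq_one {M : Matrix (Fin 2) (Fin 2) ℂ} (hdet : M.det = 1)
    (htr : M.trace = 1) : orderOf M = 6 := by
  have h2 : M ^ 2 = M - 1 := by simp [mul_self_of_det_eq_one hdet, htr]
  have h3 : M ^ 3 = -1 := by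
    rw [pow_succ, h2, sub_mul, ← pow_two, h2]
    simp
  refine orderOf_eq_of_pow_and_pow_div_prime (by norm_num) ?_ fun p hp hd => ?_
  · rw [show 6 = 3 * 2 by norm_num, pow_mul, h3]
    simp
  · have hp6 : p = 2 ∨ p = 3 := by
      rw [show 6 = 2 * 3 by norm_num, hp.dvd_mul, Nat.prime_dvd_prime_iff_eq hp Nat.prime_two,
        Nat.prime_dvd_prime_iff_eq hp Nat.prime_three] at hd
      exact hd
    rcases hp6 with rfl | rfl
    · simpa [h3] using neg_one_ne_one_matrix
    · intro h
      rw [show 6 / 3 = 2 by norm_num, h2, sub_eq_iff_eq_add] at h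
      rw [h, Matrix.trace_add, Matrix.trace_one] at htr
      norm_num at htr

theorem trace_A₁_mul_A₂ : (A₁ * A₂).trace = 0 := by
  simp [A₁, A₂, Matrix.trace_fin_two]
  grind [s2_mul_self]

theorem trace_A₂_mul_A₃ : (A₂ * A₃).trace = -1 := by
  simp [A₂, A₃, Matrix.trace_fin_two]
  grind [s2_mul_self]

theorem trace_A₁_mul_A₃ : (A₁ * A₃).trace = -1 := by
  simp [A₁, A₃, Matrix.trace_fin_two]
  grind [s2_mul_self]

theorem A₂_mul_A₁_sq : (A₂ * A₁) ^ 2 = -1 := by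
  rw [mul_self_of_det_eq_one (by simp [det_A₁, det_A₂]), Matrix.trace_mul_comm, trace_A₁_mul_A₂]
  simp

/-- the subgroups generated by {A₁,A₂}, {A₂,A₃}, {A₁,A₃} and
{A₁, A₃(A₂A₁)²} are finite of orders 8, 6, 6 and 12 respectively. -/
theorem stmt_17 :
    Nat.card (genGL2 {A₁, A₂}) = 8 ∧
    Nat.card (genGL2 {A₂, A₃}) = 6 ∧
    Nat.card (genGL2 {A₁, A₃}) = 6 ∧
    Nat.card (genGL2 {A₁, A₃ * (A₂ * A₁) ^ 2}) = 12 := by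
  refine ⟨?_, ?_, ?_, ?_⟩
  · rw [card_genGL2_pair A₁_mul_self A₂_mul_self det_A₁ det_A₂,
      orderOf_eq_four_of_trace_eq_zero (by simp [det_A₁, det_A₂]) trace_A₁_mul_A₂]
  · rw [card_genGL2_pair A₂_mul_self A₃_mul_self det_A₂ det_A₃,
      orderOf_eq_three_of_trace_eq_neg_one (by simp [det_A₂, det_A₃]) trace_A₂_mul_A₃]
  · rw [card_genGL2_pair A₁_mul_self A₃_mul_self det_A₁ det_A₃,
      orderOf_eq_three_of_trace_eq_neg_one (by simp [det_A₁, det_A₃]) trace_A₁_mul_A₃]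
  · rw [A₂_mul_A₁_sq, mul_neg_one, card_genGL2_pair A₁_mul_self (by simp [A₃_mul_self]) det_A₁
        (by simp [Matrix.det_neg, det_A₃]),
      orderOf_eq_six_of_trace_eq_one (by simp [Matrix.det_neg, det_A₁, det_A₃])
        (by simp [trace_A₁_mul_A₃])]
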